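/- Fix p > 2, k ∈ (0, d_p), M > 0 and a function ε ↦ C_ε from (0,1) to (0,∞). There exists r₀ > 0, depending only on n, p, k, M and the function ε ↦ C_ε, with the following property. Let ω ⊆ ℝⁿ be open, let a ∈ ℝⁿ and e a unit vector with the open segment {a + se : 0 < s < R} contained in ω for some R > 0, let t₀ < t₁, and let v, its first and second spatial derivatives and its first time derivative be continuous on ω × [t₀, t₁], with v_t − Δv = |∇v|^p in ω × (t₀, t₁) and |v_t| ≤ M in ω × (t₀, t₁). Suppose that for every ε ∈ (0,1), every s ∈ (0, R), every t ∈ (t₀, t₁) and every unit vector τ orthogonal to e, one has |∇v(a+se, t)·τ|^p + |τ·(D²v(a+se, t))τ| ≤ ε s^{−βp} + C_ε. If ∇v(a+re, t)·e ≤ k r^{−β} for some r ∈ (0, min{r₀, R}) and some t ∈ (t₀, t₁), then ∇v(a+se, t)·e ≤ k s^{−β} for all s ∈ (0, r). -/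

import Mathlib

open Set Metric Filter RealInnerProductSpace

noncomputable section

/-
Write `∂ₑv` for the derivative of `v` along the ray. The function `k s ^ (-β)` is a barrier for
`∂ₑv`, to be compared backward in `s`. Where the two touch, the tangential estimate gives
`|∇v| ≤ (k + δ ^ (1/p)) s ^ (-β)` with `δ` small, and `Δv` differs from the second derivative along
the ray by a small multiple of `s ^ (-β p)`, which also absorbs `M`. So, up to a small error,
`∂ₑ²v ≥ -|∇v| ^ p ≥ -k ^ p s ^ (-β p)`. Since `β p = β + 1`, the slope of the barrier is
`-β k s ^ (-β p)`, and `k < β ^ β` means exactly `k ^ p < β k`: at a contact point `∂ₑv` grows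
strictly faster than the barrier, so it cannot cross above it when `s` decreases.
-/

theorem image_le_of_deriv_left_lt_deriv_boundary {f f' B B' : ℝ → ℝ} {a b : ℝ}
    (hf : ContinuousOn f (Icc a b)) (hf' : ∀ x ∈ Ioc a b, HasDerivWithinAt f (f' x) (Iic x) x)
    (hb : f b ≤ B b)
    (hB : ContinuousOn B (Icc a b)) (hB' : ∀ x ∈ Ioc a b, HasDerivWithinAt B (B' x) (Iic x) x)
    (bound : ∀ x ∈ Ioc a b, f x = B x → B' x < f' x) : ∀ ⦃x⦄, x ∈ Icc a b → f x ≤ B x := by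
  intro x hx
  have mapsTo_Icc : MapsTo Neg.neg (Icc (-b) (-a)) (Icc a b) :=
    fun y hy ↦ ⟨le_neg_of_le_neg hy.2, neg_le_of_neg_le hy.1⟩
  have mapsTo_Ioc : MapsTo Neg.neg (Ico (-b) (-a)) (Ioc a b) :=
    fun y hy ↦ ⟨lt_neg_of_lt_neg hy.2, neg_le_of_neg_le hy.1⟩
  have reflect {g g' : ℝ → ℝ} (hg : ∀ y ∈ Ioc a b, HasDerivWithinAt g (g' y) (Iic y) y) :
      ∀ y ∈ Ico (-b) (-a), HasDerivWithinAt (fun z ↦ g (-z)) (-g' (-y)) (Ici y) y := by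
    intro y hy
    simpa [Function.comp_def] using (hg (-y) (mapsTo_Ioc hy)).scomp y
      (hasDerivAt_neg y).hasDerivWithinAt
      (show MapsTo Neg.neg (Ici y) (Iic (-y)) from fun _ hz ↦ mem_Iic.mpr (neg_le_neg hz))
  simpa using image_le_of_deriv_right_lt_deriv_boundary'
    (hf.comp continuousOn_neg mapsTo_Icc) (reflect hf') (by simpa using hb)
    (hB.comp continuousOn_neg mapsTo_Icc) (reflect hB')
    (fun y hy h ↦ neg_lt_neg (bound (-y) (mapsTo_Ioc hy) h))
    (show -x ∈ Icc (-b) (-a) from ⟨neg_le_neg hx.2, neg_le_neg hx.1⟩)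

section InnerProductSpace

variable {E : Type*} [NormedAddCommGroup E] [InnerProductSpace ℝ E]

theorem hasDerivAt_inner_comp_ray {G : E → E} {G' : E →L[ℝ] E} {a e : E} {s : ℝ}
    (hG : HasFDerivAt G G' (a + s • e)) :
    HasDerivAt (fun x : ℝ ↦ ⟪G (a + x • e), e⟫) ⟪G' e, e⟫ s := by
  have ray : HasDerivAt (fun x : ℝ ↦ a + x • e) e s := by
    simpa using ((hasDerivAt_id s).smul_const e).const_add a
  simpa using (hG.comp_hasDerivAt s ray).inner ℝ (hasDerivAt_const s e)

theorem norm_le_abs_inner_add_of_forall_orthogonal {G e : E} {c : ℝ} (he : ‖e‖ = 1) (hc : 0 ≤ c)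
    (h : ∀ τ : E, ‖τ‖ = 1 → ⟪τ, e⟫ = 0 → ⟪G, τ⟫ ≤ c) : ‖G‖ ≤ |⟪G, e⟫| + c := by
  obtain ⟨w, hw⟩ : ∃ w, G = ⟪G, e⟫ • e + w := ⟨G - ⟪G, e⟫ • e, by abel⟩
  have hwe : ⟪w, e⟫ = 0 := by
    have : ⟪G, e⟫ = ⟪G, e⟫ + ⟪w, e⟫ := by
      conv_lhs => rw [hw]
      simp [inner_add_left, real_inner_smul_left, he]
    linarith
  have hGw : ⟪G, w⟫ = ‖w‖ * ‖w‖ := by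
    nth_rw 1 [hw]
    rw [inner_add_left, real_inner_smul_left, real_inner_comm w e, hwe, mul_zero, zero_add,
      real_inner_self_eq_norm_mul_norm]
  have norm_w_le : ‖w‖ ≤ c := by
    rcases eq_or_ne w 0 with rfl | hw0
    · simpa using hc
    · have hw0' : ‖w‖ ≠ 0 := norm_ne_zero_iff.mpr hw0
      calc ‖w‖ = ⟪G, ‖w‖⁻¹ • w⟫ := by rw [real_inner_smul_right, hGw, inv_mul_cancel_left₀ hw0']
        _ ≤ c := h _ (norm_smul_inv_norm hw0) (by rw [real_inner_smul_left, hwe, mul_zero])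
  calc ‖G‖ = ‖⟪G, e⟫ • e + w‖ := congrArg norm hw
    _ ≤ ‖⟪G, e⟫ • e‖ + ‖w‖ := norm_add_le _ _
    _ ≤ |⟪G, e⟫| + c := by
      rw [norm_smul, he, mul_one, Real.norm_eq_abs]
      gcongr

section FiniteDimensional

variable [FiniteDimensional ℝ E]

theorem trace_le_inner_add_of_forall_orthogonal {T : E →ₗ[ℝ] E} {e : E} {c : ℝ} (he : ‖e‖ = 1)
    (h : ∀ τ : E, ‖τ‖ = 1 → ⟪τ, e⟫ = 0 → ⟪T τ, τ⟫ ≤ c) :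
    LinearMap.trace ℝ E T ≤ ⟪T e, e⟫ + (Module.finrank ℝ E - 1) * c := by
  classical
  have orthonormal_e : Orthonormal ℝ ((↑) : ({e} : Set E) → E) :=
    ⟨fun ⟨_, hx⟩ ↦ hx ▸ he, fun i j hij ↦ absurd (Subsingleton.elim i j) hij⟩
  obtain ⟨u, b, heu, hb⟩ := orthonormal_e.exists_orthonormalBasis_extension
  have heu : e ∈ u := heu rfl
  have trace_eq : LinearMap.trace ℝ E T = ∑ τ ∈ u, ⟪T τ, τ⟫ := by
    rw [T.trace_eq_sum_inner b, hb, ← Finset.sum_coe_sort u]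
    exact Finset.sum_congr rfl fun _ _ ↦ real_inner_comm _ _
  have card_erase : ((u.erase e).card : ℝ) = Module.finrank ℝ E - 1 := by
    rw [Module.finrank_eq_card_basis b.toBasis, Fintype.card_coe, ← Finset.card_erase_add_one heu]
    simp
  have orthonormal_u : Orthonormal ℝ ((↑) : u → E) := hb ▸ b.orthonormal
  have tangential_le : ∑ τ ∈ u.erase e, ⟪T τ, τ⟫ ≤ (u.erase e).card • c := by
    refine Finset.sum_le_card_nsmul _ _ _ fun τ hτ ↦ ?_
    obtain ⟨hτe, hτu⟩ := Finset.mem_erase.mp hτ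
    exact h τ (orthonormal_u.1 ⟨τ, hτu⟩)
      (orthonormal_u.2 (i := ⟨τ, hτu⟩) (j := ⟨e, heu⟩) (by simpa using hτe))
  rw [nsmul_eq_mul, card_erase] at tangential_le
  rw [trace_eq, ← Finset.add_sum_erase u _ heu]
  gcongr

theorem neg_mul_rpow_le_inner_of_neg_le_trace_add_norm_rpow {p k δ m : ℝ} (hp : 0 < p)
    (hk : 0 ≤ k) (hδ : 0 ≤ δ) (hm : 0 ≤ m) {G e : E} {T : E →ₗ[ℝ] E} (he : ‖e‖ = 1)
    (hGe : ⟪G, e⟫ = k * m) (htrace : -(δ * m ^ p) ≤ LinearMap.trace ℝ E T + ‖G‖ ^ p)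
    (htan : ∀ τ : E, ‖τ‖ = 1 → ⟪τ, e⟫ = 0 → |⟪G, τ⟫| ^ p + |⟪T τ, τ⟫| ≤ δ * m ^ p) :
    -(((k + δ ^ p⁻¹) ^ p + Module.finrank ℝ E * δ) * m ^ p) ≤ ⟪T e, e⟫ := by
  have inner_G_le (τ : E) (hτ : ‖τ‖ = 1) (hτe : ⟪τ, e⟫ = 0) : ⟪G, τ⟫ ≤ δ ^ p⁻¹ * m := by
    have : |⟪G, τ⟫| ^ p ≤ δ * m ^ p :=
      (le_add_of_nonneg_right (abs_nonneg _)).trans (htan τ hτ hτe)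
    rw [← Real.le_rpow_inv_iff_of_pos (abs_nonneg _) (by positivity) hp,
      Real.mul_rpow hδ (by positivity), Real.rpow_rpow_inv hm hp.ne'] at this
    exact (le_abs_self _).trans this
  have norm_G_rpow_le : ‖G‖ ^ p ≤ (k + δ ^ p⁻¹) ^ p * m ^ p := by
    have := norm_le_abs_inner_add_of_forall_orthogonal he (by positivity) inner_G_le
    rw [hGe, abs_of_nonneg (by positivity), ← add_mul] at this
    rw [← Real.mul_rpow (by positivity) hm]
    gcongr
  have inner_T_le (τ : E) (hτ : ‖τ‖ = 1) (hτe : ⟪τ, e⟫ = 0) : ⟪T τ, τ⟫ ≤ δ * m ^ p :=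
    (le_abs_self _).trans <|
      (le_add_of_nonneg_left (by positivity)).trans (htan τ hτ hτe)
  linarith [trace_le_inner_add_of_forall_orthogonal he inner_T_le]

theorem inner_ray_le_mul_rpow_neg {p β k δ s r : ℝ} (hp : 0 < p) (hβp : β * p = β + 1)
    (hk : 0 ≤ k) (hδ : 0 ≤ δ) (hδk : (k + δ ^ p⁻¹) ^ p + Module.finrank ℝ E * δ < β * k)
    {a e : E} {G : E → E} {G' : E → E →L[ℝ] E} (he : ‖e‖ = 1) (hs : 0 < s) (hsr : s ≤ r)
    (hG : ∀ x ∈ Icc s r, HasFDerivAt G (G' (a + x • e)) (a + x • e))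
    (htrace : ∀ x ∈ Icc s r,
      -(δ * x ^ (-(β * p))) ≤ LinearMap.trace ℝ E (G' (a + x • e)) + ‖G (a + x • e)‖ ^ p)
    (htan : ∀ x ∈ Icc s r, ∀ τ : E, ‖τ‖ = 1 → ⟪τ, e⟫ = 0 →
      |⟪G (a + x • e), τ⟫| ^ p + |⟪G' (a + x • e) τ, τ⟫| ≤ δ * x ^ (-(β * p)))
    (hr : ⟪G (a + r • e), e⟫ ≤ k * r ^ (-β)) : ⟪G (a + s • e), e⟫ ≤ k * s ^ (-β) := by
  have hpos {x : ℝ} (hx : x ∈ Icc s r) : 0 < x := hs.trans_le hx.1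
  have hderiv {x : ℝ} (hx : x ∈ Icc s r) := hasDerivAt_inner_comp_ray (hG x hx)
  have hbarrier {x : ℝ} (hx : x ∈ Icc s r) :
      HasDerivAt (fun y ↦ k * y ^ (-β)) (k * (-β * x ^ (-β - 1))) x :=
    (Real.hasDerivAt_rpow_const (.inl (hpos hx).ne')).const_mul k
  have steeper_at_contact {x : ℝ} (hx : x ∈ Icc s r)
      (hcontact : ⟪G (a + x • e), e⟫ = k * x ^ (-β)) :
      k * (-β * x ^ (-β - 1)) < ⟪G' (a + x • e) e, e⟫ := by
    have hx_rpow : x ^ (-(β * p)) = (x ^ (-β)) ^ p := by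
      rw [← Real.rpow_mul (hpos hx).le, neg_mul]
    have hx_rpow_pos : 0 < (x ^ (-β)) ^ p := hx_rpow ▸ Real.rpow_pos_of_pos (hpos hx) _
    calc k * (-β * x ^ (-β - 1)) = -(β * k * (x ^ (-β)) ^ p) := by
          rw [← hx_rpow, hβp, neg_add']; ring
      _ < -(((k + δ ^ p⁻¹) ^ p + Module.finrank ℝ E * δ) * (x ^ (-β)) ^ p) := by gcongr
      _ ≤ ⟪G' (a + x • e) e, e⟫ :=
        neg_mul_rpow_le_inner_of_neg_le_trace_add_norm_rpow hp hk hδ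
          (Real.rpow_nonneg (hpos hx).le _) he hcontact (hx_rpow ▸ htrace x hx)
          (hx_rpow ▸ htan x hx)
  exact image_le_of_deriv_left_lt_deriv_boundary
    (fun x hx ↦ (hderiv hx).continuousAt.continuousWithinAt)
    (fun x hx ↦ (hderiv (Ioc_subset_Icc_self hx)).hasDerivWithinAt) hr
    (fun x hx ↦ (hbarrier hx).continuousAt.continuousWithinAt)
    (fun x hx ↦ (hbarrier (Ioc_subset_Icc_self hx)).hasDerivWithinAt)
    (fun x hx ↦ steeper_at_contact (Ioc_subset_Icc_self hx)) (left_mem_Icc.mpr hsr)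

end FiniteDimensional

end InnerProductSpace

theorem trace_eq_sum_inner_single {ι : Type*} [Fintype ι] [DecidableEq ι]
    (T : EuclideanSpace ℝ ι →ₗ[ℝ] EuclideanSpace ℝ ι) :
    LinearMap.trace ℝ (EuclideanSpace ℝ ι) T =
      ∑ i, ⟪T (EuclideanSpace.single i (1 : ℝ)), EuclideanSpace.single i (1 : ℝ)⟫ := by
  rw [T.trace_eq_sum_inner (EuclideanSpace.basisFun ι ℝ)]
  exact Finset.sum_congr rfl fun i _ ↦ by
    rw [EuclideanSpace.basisFun_apply, real_inner_comm]

theorem rpow_lt_mul_of_lt_rpow_self {p β k : ℝ} (hp : 1 < p) (hβ : β = 1 / (p - 1)) (hk : 0 < k)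
    (hkβ : k < β ^ β) : k ^ p < β * k := by
  have hp' : 0 < p - 1 := sub_pos.mpr hp
  have hβ0 : 0 ≤ β := hβ ▸ (one_div_pos.mpr hp').le
  calc k ^ p = k ^ (p - 1) * k := by rw [← Real.rpow_add_one hk.ne', sub_add_cancel]
    _ < (β ^ β) ^ (p - 1) * k := by gcongr
    _ = β * k := by
      rw [← Real.rpow_mul hβ0, hβ, one_div_mul_cancel hp'.ne', Real.rpow_one]

open scoped Topology in
theorem eventually_add_rpow_inv_rpow_add_mul_lt {p k c : ℝ} (hp : 0 < p) (hkc : k ^ p < c)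
    (d : ℝ) : ∀ᶠ δ in 𝓝 (0 : ℝ), (k + δ ^ p⁻¹) ^ p + d * δ < c := by
  have hcont : Continuous fun δ : ℝ ↦ (k + δ ^ p⁻¹) ^ p + d * δ :=
    ((continuous_const.add (Real.continuous_rpow_const (by positivity))).rpow_const
      fun _ ↦ .inr hp.le).add (continuous_const.mul continuous_id)
  refine hcont.continuousAt.eventually_lt continuousAt_const ?_
  simpa [Real.zero_rpow (inv_ne_zero hp.ne')] using hkc

open scoped Topology in
theorem eventually_le_mul_rpow_neg {q δ : ℝ} (hq : 0 < q) (hδ : 0 < δ) (c : ℝ) :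
    ∀ᶠ x in 𝓝[>] (0 : ℝ), c ≤ δ * x ^ (-q) :=
  ((tendsto_rpow_neg_nhdsGT_zero (neg_neg_of_pos hq)).const_mul_atTop hδ).eventually_ge_atTop c

theorem stmt15_general {E : Type*} [NormedAddCommGroup E] [InnerProductSpace ℝ E]
    [FiniteDimensional ℝ E] {p β k : ℝ} (hp : 1 < p) (hβ : β = 1 / (p - 1))
    (hk : k ∈ Ioo 0 (β ^ β)) :
    ∃ ε ∈ Ioo (0 : ℝ) 1, ∀ C M : ℝ, ∃ r₀ > (0 : ℝ),
    ∀ (a e : E) (R : ℝ) (G : E → E) (G' : E → E →L[ℝ] E), ‖e‖ = 1 →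
    (∀ s ∈ Ioo 0 R, HasFDerivAt G (G' (a + s • e)) (a + s • e)) →
    (∀ s ∈ Ioo 0 R, -M ≤ LinearMap.trace ℝ E (G' (a + s • e)) + ‖G (a + s • e)‖ ^ p) →
    (∀ s ∈ Ioo 0 R, ∀ τ : E, ‖τ‖ = 1 → ⟪τ, e⟫ = 0 →
      |⟪G (a + s • e), τ⟫| ^ p + |⟪G' (a + s • e) τ, τ⟫| ≤ ε * s ^ (-(β * p)) + C) →
    ∀ r ∈ Ioo 0 (min r₀ R), ⟪G (a + r • e), e⟫ ≤ k * r ^ (-β) →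
      ∀ s ∈ Ioo 0 r, ⟪G (a + s • e), e⟫ ≤ k * s ^ (-β) := by
  obtain ⟨hk0, hkβ⟩ := hk
  have hp0 : 0 < p := one_pos.trans hp
  have hβ0 : 0 < β := hβ ▸ one_div_pos.mpr (sub_pos.mpr hp)
  have hβp : β * p = β + 1 := by
    have : p - 1 ≠ 0 := (sub_pos.mpr hp).ne'
    rw [hβ]; field_simp; ring
  obtain ⟨δ, hδ, hδ0, hδ1⟩ :=
    (((eventually_add_rpow_inv_rpow_add_mul_lt hp0 (rpow_lt_mul_of_lt_rpow_self hp hβ hk0 hkβ)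
      (Module.finrank ℝ E)).filter_mono nhdsWithin_le_nhds).and
      (Ioo_mem_nhdsGT one_pos)).exists
  refine ⟨δ / 2, ⟨half_pos hδ0, by linarith⟩, fun C M ↦ ?_⟩
  obtain ⟨r₀, hr₀, hsmall⟩ := mem_nhdsGT_iff_exists_Ioc_subset.mp <|
    (eventually_le_mul_rpow_neg (mul_pos hβ0 hp0) (half_pos hδ0) C).and
      (eventually_le_mul_rpow_neg (mul_pos hβ0 hp0) hδ0 M)
  refine ⟨r₀, hr₀, fun a e R G G' he hG htrace htan r hr hrk s hs ↦ ?_⟩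
  have hxR {x : ℝ} (hx : x ∈ Icc s r) : x ∈ Ioo 0 R :=
    ⟨hs.1.trans_le hx.1, hx.2.trans_lt (hr.2.trans_le (min_le_right _ _))⟩
  have hxr₀ {x : ℝ} (hx : x ∈ Icc s r) : x ∈ Ioc 0 r₀ :=
    ⟨hs.1.trans_le hx.1, hx.2.trans (hr.2.le.trans (min_le_left _ _))⟩
  refine inner_ray_le_mul_rpow_neg hp0 hβp hk0.le hδ0.le hδ he hs.1 hs.2.le
    (fun x hx ↦ hG x (hxR hx)) (fun x hx ↦ ?_) (fun x hx τ hτ hτe ↦ ?_) hrk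
  · exact (neg_le_neg (hsmall (hxr₀ hx)).2).trans (htrace x (hxR hx))
  · calc _ ≤ δ / 2 * x ^ (-(β * p)) + C := htan x (hxR hx) τ hτ hτe
      _ ≤ δ / 2 * x ^ (-(β * p)) + δ / 2 * x ^ (-(β * p)) := by
        gcongr
        exact (hsmall (hxr₀ hx)).1
      _ = δ * x ^ (-(β * p)) := by ring

theorem stmt15 {n : ℕ} (hn : 1 ≤ n)
    (p β dp : ℝ) (hp : 2 < p) (hβ : β = 1 / (p - 1)) (hdp : dp = β ^ β)
    (k : ℝ) (hk : k ∈ Ioo 0 dp) (M : ℝ) (hM : 0 < M)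
    (Cf : ℝ → ℝ) (hCf : ∀ ε ∈ Ioo (0 : ℝ) 1, 0 < Cf ε) :
    ∃ r₀ > (0 : ℝ),
    ∀ ω : Set (EuclideanSpace ℝ (Fin n)), IsOpen ω →
    ∀ a e : EuclideanSpace ℝ (Fin n), ‖e‖ = 1 →
    ∀ R > (0 : ℝ), (∀ s ∈ Ioo (0 : ℝ) R, a + s • e ∈ ω) →
    ∀ t₀ t₁ : ℝ, t₀ < t₁ →
    ∀ (v : EuclideanSpace ℝ (Fin n) → ℝ → ℝ) (Gv : EuclideanSpace ℝ (Fin n) → ℝ → EuclideanSpace ℝ (Fin n)) (Hv : EuclideanSpace ℝ (Fin n) → ℝ → (EuclideanSpace ℝ (Fin n) →L[ℝ] EuclideanSpace ℝ (Fin n)))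
      (v' : EuclideanSpace ℝ (Fin n) → ℝ → ℝ),
    -- v, its first and second spatial derivatives and its first time derivative are
    -- continuous on ω × [t₀, t₁]
    ContinuousOn (fun q : EuclideanSpace ℝ (Fin n) × ℝ => (v q.1 q.2, Gv q.1 q.2, Hv q.1 q.2, v' q.1 q.2))
      (ω ×ˢ Icc t₀ t₁) →
    (∀ t ∈ Icc t₀ t₁, ∀ x ∈ ω, HasGradientAt (fun y => v y t) (Gv x t) x) →
    (∀ t ∈ Icc t₀ t₁, ∀ x ∈ ω, HasFDerivAt (fun y => Gv y t) (Hv x t) x) →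
    (∀ x ∈ ω, ∀ t ∈ Icc t₀ t₁, HasDerivWithinAt (fun s => v x s) (v' x t) (Icc t₀ t₁) t) →
    -- vₜ - Δv = |∇v|^p in ω × (t₀, t₁)
    (∀ x ∈ ω, ∀ t ∈ Ioo t₀ t₁,
      v' x t - ∑ i : Fin n, ⟪Hv x t (EuclideanSpace.single i (1 : ℝ)),
        EuclideanSpace.single i (1 : ℝ)⟫ = ‖Gv x t‖ ^ p) →
    -- |vₜ| ≤ M in ω × (t₀, t₁)
    (∀ x ∈ ω, ∀ t ∈ Ioo t₀ t₁, |v' x t| ≤ M) →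
    -- tangential estimate (7.3)
    (∀ ε ∈ Ioo (0 : ℝ) 1, ∀ s ∈ Ioo (0 : ℝ) R, ∀ t ∈ Ioo t₀ t₁,
      ∀ τ : EuclideanSpace ℝ (Fin n), ‖τ‖ = 1 → ⟪τ, e⟫ = 0 →
        |⟪Gv (a + s • e) t, τ⟫| ^ p + |⟪Hv (a + s • e) t τ, τ⟫| ≤ ε * s ^ (-(β * p)) + Cf ε) →
    -- conclusion
    ∀ r ∈ Ioo 0 (min r₀ R), ∀ t ∈ Ioo t₀ t₁,
      ⟪Gv (a + r • e) t, e⟫ ≤ k * r ^ (-β) →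
      ∀ s ∈ Ioo (0 : ℝ) r, ⟪Gv (a + s • e) t, e⟫ ≤ k * s ^ (-β) := by
  obtain ⟨ε, hε, h⟩ := stmt15_general (E := EuclideanSpace ℝ (Fin n)) (by linarith) hβ (hdp ▸ hk)
  obtain ⟨r₀, hr₀, h⟩ := h (Cf ε) M
  refine ⟨r₀, hr₀, fun ω _ a e he R _ hω t₀ t₁ _ v Gv Hv v' _ _ hHv _ hpde hM' htan r hr t ht ↦
    h a e R (Gv · t) (Hv · t) he (fun s hs ↦ hHv t (Ioo_subset_Icc_self ht) _ (hω s hs))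
      (fun s hs ↦ ?_) (fun s hs ↦ htan ε hε s hs t ht) r hr⟩
  rw [trace_eq_sum_inner_single, ← hpde _ (hω s hs) t ht]
  simp only [ContinuousLinearMap.coe_coe, add_sub_cancel]
  exact neg_le_of_abs_le (hM' _ (hω s hs) t ht)
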